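/- Let G = (V, E) be a finite directed graph with real edge weights w and no cycle of negative total weight, and let G_q be the graph obtained from G by adding one new node q together with an edge of weight 0 from q to every node of V. Then p(v) := dist_{G_q}(q, v) is finite for every v ∈ V, and p is a valid potential function for G, i.e., w(u, v) + p(u) − p(v) ≥ 0 for every edge (u, v) ∈ E. Moreover, p remains a valid potential function for every subgraph of G obtained by deleting edges or nodes. -/

import Mathlib

/-- `IsWalk E l s t`: the nonempty list `l` is the node sequence of a walk from `s` to `t`
in the directed graph with edge relation `E`. -/
def IsWalk {V : Type*} (E : V → V → Prop) (l : List V) (s t : V) : Prop :=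
  l ≠ [] ∧ l.head? = some s ∧ l.getLast? = some t ∧ l.Chain' E

/-- The length (total weight) of a walk with node sequence `l` under edge weights `w`. -/
def walkLen {V : Type*} (w : V → V → ℝ) (l : List V) : ℝ :=
  ((l.zip l.tail).map fun e => w e.1 e.2).sum

/-- `edist E w s t`: the distance from `s` to `t`, i.e. the infimum of the lengths of all
walks from `s` to `t` (`⊤` if there is none). -/
noncomputable def edist {V : Type*} (E : V → V → Prop) (w : V → V → ℝ) (s t : V) : EReal :=
  sInf {x : EReal | ∃ l : List V, IsWalk E l s t ∧ x = (walkLen w l : ℝ)}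

/-!
A closed subwalk can be cut out of a walk without increasing its length when no cycle is negative,
so every walk dominates one with the same endpoints and no repeated node. A finite graph has only
finitely many of the latter, which bounds all walk lengths from below. A walk of `G_q` from `q` to
`v` is `q` followed by a walk of `G` ending at `v`, of the same length, hence
`dist(q, v) = inf_u dist(u, v)`; this lies between that bound and the length `0` of the trivial
walk at `v`. That `dist(q, ·)` is a potential is then the triangle inequality
`dist(q, v) ≤ dist(q, u) + w(u, v)`, rearranged.
-/

section Walk

variable {V W : Type*} {E : V → V → Prop} {l : List V} {s t u v x y : V}

theorem isWalk_iff :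
    IsWalk E l s t ↔ l.head? = some s ∧ l.getLast? = some t ∧ l.IsChain E :=
  ⟨fun h => h.2, fun h => ⟨by rintro rfl; simp at h, h⟩⟩

theorem isWalk_singleton (E : V → V → Prop) (v : V) : IsWalk E [v] v v := by
  simp [isWalk_iff]

theorem isWalk_pair (huv : E u v) : IsWalk E [u, v] u v := by
  simpa [isWalk_iff] using huv

theorem isWalk_cons_cons_iff :
    IsWalk E (x :: y :: l) s t ↔ x = s ∧ E x y ∧ IsWalk E (y :: l) y t := by
  simp only [isWalk_iff, List.head?_cons, Option.some.injEq, List.getLast?_cons_cons,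
    List.isChain_cons_cons, true_and]
  tauto

theorem isWalk_append_cons_iff {a c : List V} :
    IsWalk E (a ++ x :: c) s t ↔ IsWalk E (a ++ [x]) s x ∧ IsWalk E (x :: c) x t := by
  have hhead : (a ++ x :: c).head? = (a ++ [x]).head? := by cases a <;> rfl
  have hlast : (a ++ x :: c).getLast? = (x :: c).getLast? := by
    simp [List.getLast?_cons]
  have hchain : (a ++ x :: c).IsChain E ↔ (a ++ [x]).IsChain E ∧ (x :: c).IsChain E :=
    List.isChain_split
  simp only [isWalk_iff, hchain, hhead, hlast, List.getLast?_concat, List.head?_cons, true_and]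
  tauto

theorem isWalk_map_iff {R : W → W → Prop} {f : V → W} (hf : Function.Injective f) :
    IsWalk R (l.map f) (f s) (f t) ↔ IsWalk (fun a b => R (f a) (f b)) l s t := by
  simp [isWalk_iff, List.isChain_map, hf.eq_iff]

theorem IsWalk.exists_eq_cons (h : IsWalk E l s t) : ∃ m, l = s :: m :=
  List.head?_eq_some_iff.1 (isWalk_iff.1 h).1

theorem IsWalk.exists_eq_concat (h : IsWalk E l s t) : ∃ m, l = m ++ [t] :=
  List.getLast?_eq_some_iff.1 (isWalk_iff.1 h).2.1

variable (w : V → V → ℝ)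

theorem walkLen_singleton (x : V) : walkLen w [x] = 0 := by
  simp [walkLen]

theorem walkLen_cons_cons (x y : V) (l : List V) :
    walkLen w (x :: y :: l) = w x y + walkLen w (y :: l) := by
  simp [walkLen]

theorem walkLen_append_cons (a : List V) (x : V) (c : List V) :
    walkLen w (a ++ x :: c) = walkLen w (a ++ [x]) + walkLen w (x :: c) := by
  induction a with
  | nil => simp [walkLen_singleton]
  | cons y a ih =>
    cases a with
    | nil => simp [walkLen_cons_cons, walkLen_singleton]
    | cons z a =>
      simp only [List.cons_append, walkLen_cons_cons] at ih ⊢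
      rw [ih, add_assoc]

theorem walkLen_map (w : W → W → ℝ) (f : V → W) (l : List V) :
    walkLen w (l.map f) = walkLen (fun a b => w (f a) (f b)) l := by
  simp [walkLen, ← List.map_tail, List.zip_map, Function.comp_def]

variable {w}

theorem IsWalk.exists_concat (h : IsWalk E l s u) (huv : E u v) :
    ∃ m, IsWalk E m s v ∧ walkLen w m = walkLen w l + w u v := by
  obtain ⟨a, rfl⟩ := h.exists_eq_concat
  refine ⟨a ++ [u, v], isWalk_append_cons_iff.2 ⟨h, isWalk_pair huv⟩, ?_⟩
  rw [walkLen_append_cons, walkLen_cons_cons, walkLen_singleton, add_zero]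

end Walk

section NoNegativeCycle

variable {V : Type*} {E : V → V → Prop} {w : V → V → ℝ} {l : List V} {s t : V}

/-- The weighted graph `(E, w)` has no cycle of negative total weight. A cycle is a closed walk
with at least one edge, that is, with at least two entries in its node sequence. -/
def NoNegativeCycle (E : V → V → Prop) (w : V → V → ℝ) : Prop :=
  ∀ (l : List V) (s : V), IsWalk E l s s → 2 ≤ l.length → 0 ≤ walkLen w l

theorem exists_eq_append_cons_append_cons_of_not_nodup (hl : ¬ l.Nodup) :
    ∃ a x b c, l = a ++ x :: (b ++ x :: c) := by
  obtain ⟨x, hx⟩ := List.exists_duplicate_iff_not_nodup.2 hl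
  obtain ⟨a, r, rfl, hxa, hxr⟩ := List.cons_sublist_iff.1 (List.duplicate_iff_sublist.1 hx)
  obtain ⟨a, b, rfl⟩ := List.append_of_mem hxa
  obtain ⟨b', c, rfl⟩ := List.append_of_mem (List.singleton_sublist.1 hxr)
  exact ⟨a, x, b ++ b', c, by simp⟩

theorem IsWalk.exists_shorter_of_not_nodup (hE : NoNegativeCycle E w) (h : IsWalk E l s t)
    (hl : ¬ l.Nodup) :
    ∃ m, m.length < l.length ∧ IsWalk E m s t ∧ walkLen w m ≤ walkLen w l := by
  obtain ⟨a, x, b, c, rfl⟩ := exists_eq_append_cons_append_cons_of_not_nodup hl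
  obtain ⟨hprefix, hrest⟩ := isWalk_append_cons_iff.1 h
  obtain ⟨hcycle, hsuffix⟩ := isWalk_append_cons_iff (a := x :: b).1 hrest
  refine ⟨a ++ x :: c, by simp, isWalk_append_cons_iff.2 ⟨hprefix, hsuffix⟩, ?_⟩
  have hcycle_nonneg : 0 ≤ walkLen w (x :: b ++ [x]) := hE _ x hcycle (by simp)
  calc walkLen w (a ++ x :: c)
      = walkLen w (a ++ [x]) + walkLen w (x :: c) := walkLen_append_cons w a x c
    _ ≤ walkLen w (a ++ [x]) + (walkLen w (x :: b ++ [x]) + walkLen w (x :: c)) := by linarith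
    _ = walkLen w (a ++ x :: (b ++ x :: c)) := by
      rw [← walkLen_append_cons, List.cons_append, ← walkLen_append_cons]

theorem IsWalk.exists_nodup_walkLen_le (hE : NoNegativeCycle E w) (h : IsWalk E l s t) :
    ∃ m, m.Nodup ∧ IsWalk E m s t ∧ walkLen w m ≤ walkLen w l := by
  induction hn : l.length using Nat.strong_induction_on generalizing l with
  | _ n ih =>
    by_cases hl : l.Nodup
    · exact ⟨l, hl, h, le_rfl⟩
    · obtain ⟨l', hlt, h', hle⟩ := h.exists_shorter_of_not_nodup hE hl
      obtain ⟨m, hm, hwalk, hle'⟩ := ih _ (hn ▸ hlt) h' rfl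
      exact ⟨m, hm, hwalk, hle'.trans hle⟩

theorem NoNegativeCycle.exists_forall_le_walkLen [Finite V] (hE : NoNegativeCycle E w) :
    ∃ B : ℝ, ∀ l s t, IsWalk E l s t → B ≤ walkLen w l := by
  cases nonempty_fintype V
  have hfinite : {l : List V | l.Nodup}.Finite :=
    (List.finite_length_le V (Fintype.card V)).subset fun _ hl => hl.length_le_card
  obtain ⟨B, hB⟩ := (hfinite.image (walkLen w)).bddBelow
  refine ⟨B, fun l s t h => ?_⟩
  obtain ⟨m, hm, -, hle⟩ := h.exists_nodup_walkLen_le hE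
  exact (hB ⟨m, hm, rfl⟩).trans hle

end NoNegativeCycle

section Distance

variable {V : Type*} {E : V → V → Prop} {w : V → V → ℝ} {l : List V} {s t u v : V}

theorem edist_le_walkLen (h : IsWalk E l s t) : edist E w s t ≤ walkLen w l :=
  sInf_le ⟨l, h, rfl⟩

theorem le_edist_iff {x : EReal} :
    x ≤ edist E w s t ↔ ∀ l, IsWalk E l s t → x ≤ walkLen w l := by
  refine le_sInf_iff.trans ⟨fun h l hl => h _ ⟨l, hl, rfl⟩, ?_⟩
  rintro h _ ⟨l, hl, rfl⟩
  exact h l hl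

theorem edist_self_le_zero (E : V → V → Prop) (w : V → V → ℝ) (v : V) : edist E w v v ≤ 0 := by
  simpa [walkLen_singleton] using edist_le_walkLen (w := w) (isWalk_singleton E v)

theorem edist_le_edist_add (w : V → V → ℝ) (s : V) (huv : E u v) :
    edist E w s v ≤ edist E w s u + w u v := by
  have hsub : edist E w s v - w u v ≤ edist E w s u := by
    refine le_edist_iff.2 fun l hl => ?_
    obtain ⟨m, hm, hlen⟩ := hl.exists_concat (w := w) huv
    rw [EReal.sub_le_iff_le_add (by simp) (by simp), ← EReal.coe_add, ← hlen]
    exact edist_le_walkLen hm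
  rwa [EReal.sub_le_iff_le_add (by simp) (by simp)] at hsub

theorem toReal_edist_le_toReal_edist_add (huv : E u v) (hv : edist E w s v ≠ ⊥)
    (hu : edist E w s u ≠ ⊤) :
    (edist E w s v).toReal ≤ (edist E w s u).toReal + w u v := by
  have hle := edist_le_edist_add w s huv
  have hu' : edist E w s u ≠ ⊥ := by
    intro h
    simp [h, hv] at hle
  rw [← EReal.toReal_coe (w u v), ← EReal.toReal_add hu hu' (by simp) (by simp)]
  exact EReal.toReal_le_toReal hle hv (EReal.add_ne_top hu (by simp))

end Distance

section Potential

variable {V : Type*} {E F : V → V → Prop} {w : V → V → ℝ} {p : V → ℝ}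

/-- `p` is a potential function for the weighted graph `(E, w)`: all reduced weights
`w u v + p u - p v` of edges are nonnegative. -/
def IsPotential (E : V → V → Prop) (w : V → V → ℝ) (p : V → ℝ) : Prop :=
  ∀ u v, E u v → 0 ≤ w u v + p u - p v

theorem IsPotential.mono (hp : IsPotential E w p) (hFE : ∀ u v, F u v → E u v) :
    IsPotential F w p :=
  fun u v huv => hp u v (hFE u v huv)

end Potential

section SourceExtension

variable {V : Type*} {E : V → V → Prop} {w : V → V → ℝ}
  {E' : Option V → Option V → Prop} {w' : Option V → Option V → ℝ}
  {u v : V} {l : List (Option V)}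

/-- `(E', w')` is the weighted graph `G_q` obtained from `G = (E, w)` by adding a source `q`,
encoded as `none`, with an edge of weight `0` to every node of `G`. The values of `w'` on pairs
ending in `none`, none of which is an edge, are left unconstrained. -/
structure IsSourceExtension (E : V → V → Prop) (w : V → V → ℝ)
    (E' : Option V → Option V → Prop) (w' : Option V → Option V → ℝ) : Prop where
  not_adj_none : ∀ a, ¬ E' a none
  adj_none_some : ∀ v, E' none (some v)
  adj_some_some : ∀ u v, E' (some u) (some v) ↔ E u v
  weight_none_some : ∀ v, w' none (some v) = 0
  weight_some_some : ∀ u v, w' (some u) (some v) = w u v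

namespace IsSourceExtension

theorem isWalk_map_some_iff (h : IsSourceExtension E w E' w') {m : List V} :
    IsWalk E' (m.map some) (some u) (some v) ↔ IsWalk E m u v := by
  simp only [isWalk_map_iff (Option.some_injective V), h.adj_some_some]

theorem walkLen_map_some (h : IsSourceExtension E w E' w') (m : List V) :
    walkLen w' (m.map some) = walkLen w m := by
  simp only [walkLen_map, h.weight_some_some]

theorem exists_eq_map_some_of_isChain_cons (h : IsSourceExtension E w E' w') {a : Option V}
    (hl : (a :: l).IsChain E') : ∃ m : List V, l = m.map some := by
  induction l generalizing a with
  | nil => exact ⟨[], rfl⟩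
  | cons b l ih =>
    obtain ⟨hab, hbl⟩ := List.isChain_cons_cons.1 hl
    obtain ⟨m, rfl⟩ := ih hbl
    cases b with
    | none => exact absurd hab (h.not_adj_none a)
    | some v => exact ⟨v :: m, rfl⟩

theorem isWalk_none_some_iff (h : IsSourceExtension E w E' w') :
    IsWalk E' l none (some v) ↔ ∃ u m, l = none :: m.map some ∧ IsWalk E m u v := by
  constructor
  · intro hl
    obtain ⟨l, rfl⟩ := hl.exists_eq_cons
    obtain ⟨m, rfl⟩ := h.exists_eq_map_some_of_isChain_cons (isWalk_iff.1 hl).2.2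
    cases m with
    | nil => simp [isWalk_iff] at hl
    | cons u m =>
      exact ⟨u, u :: m, rfl, h.isWalk_map_some_iff.1 (isWalk_cons_cons_iff.1 hl).2.2⟩
  · rintro ⟨u, m, rfl, hm⟩
    obtain ⟨m, rfl⟩ := hm.exists_eq_cons
    exact isWalk_cons_cons_iff.2 ⟨rfl, h.adj_none_some u, h.isWalk_map_some_iff.2 hm⟩

theorem walkLen_none_cons_map_some (h : IsSourceExtension E w E' w') {m : List V}
    (hm : IsWalk E m u v) : walkLen w' (none :: m.map some) = walkLen w m := by
  obtain ⟨m, rfl⟩ := hm.exists_eq_cons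
  rw [← h.walkLen_map_some, List.map_cons, walkLen_cons_cons, h.weight_none_some, zero_add]

theorem edist_none_some_eq_iInf (h : IsSourceExtension E w E' w') (v : V) :
    edist E' w' none (some v) = ⨅ u, edist E w u v := by
  refine eq_of_forall_le_iff fun x => ?_
  simp only [le_iInf_iff, le_edist_iff, h.isWalk_none_some_iff]
  constructor
  · intro hx u m hm
    exact h.walkLen_none_cons_map_some hm ▸ hx _ ⟨u, m, rfl, hm⟩
  · rintro hx _ ⟨u, m, rfl, hm⟩
    exact h.walkLen_none_cons_map_some hm ▸ hx u m hm

theorem edist_none_some_ne_top (h : IsSourceExtension E w E' w') (v : V) :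
    edist E' w' none (some v) ≠ ⊤ := by
  rw [h.edist_none_some_eq_iInf]
  have hle : ⨅ u, edist E w u v ≤ 0 := iInf_le_of_le v (edist_self_le_zero E w v)
  exact (hle.trans_lt EReal.zero_lt_top).ne

theorem edist_none_some_ne_bot [Finite V] (h : IsSourceExtension E w E' w')
    (hE : NoNegativeCycle E w) (v : V) : edist E' w' none (some v) ≠ ⊥ := by
  obtain ⟨B, hB⟩ := hE.exists_forall_le_walkLen
  rw [h.edist_none_some_eq_iInf]
  refine ((EReal.bot_lt_coe B).trans_le (le_iInf fun u => le_edist_iff.2 fun l hl => ?_)).ne'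
  exact EReal.coe_le_coe_iff.2 (hB l u v hl)

theorem isPotential_toReal_edist [Finite V] (h : IsSourceExtension E w E' w')
    (hE : NoNegativeCycle E w) :
    IsPotential E w fun v => (edist E' w' none (some v)).toReal := by
  intro u v huv
  have hle := toReal_edist_le_toReal_edist_add (w := w') ((h.adj_some_some u v).2 huv)
    (h.edist_none_some_ne_bot hE v) (h.edist_none_some_ne_top u)
  rw [h.weight_some_some] at hle
  linarith

end IsSourceExtension

end SourceExtension

/-- If `G` has no negative cycle, and `G_q` (nodes `Option V`, `q = none`)
is obtained by adding a new node `q` with `0`-weight edges to every node of `G`, then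
`p v := dist_{G_q}(q, v)` is finite for every `v`, is a valid potential function for `G`,
and remains a valid potential function for every subgraph of `G`. -/
theorem stmt9 {V : Type} [Fintype V] [DecidableEq V]
    (E : V → V → Prop) (w : V → V → ℝ)
    -- no cycle of negative total weight
    (hnoneg : ∀ (l : List V) (s : V), IsWalk E l s s → 2 ≤ l.length → 0 ≤ walkLen w l)
    (E' : Option V → Option V → Prop)
    (hE' : ∀ a b : Option V, E' a b ↔
      ((a = none ∧ ∃ z : V, b = some z) ∨ (∃ u z : V, a = some u ∧ b = some z ∧ E u z)))
    (w' : Option V → Option V → ℝ)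
    (hw'0 : ∀ z : V, w' none (some z) = 0)
    (hw' : ∀ u z : V, w' (some u) (some z) = w u z) :
    ∃ p : V → ℝ,
      (∀ z : V, (p z : EReal) = edist E' w' none (some z)) ∧
      (∀ u z, E u z → 0 ≤ w u z + p u - p z) ∧
      (∀ E'' : V → V → Prop, (∀ u z, E'' u z → E u z) →
        ∀ u z, E'' u z → 0 ≤ w u z + p u - p z) := by
  have hq : IsSourceExtension E w E' w' :=
    ⟨by simp [hE'], by simp [hE'], by simp [hE'], hw'0, hw'⟩
  have hp := hq.isPotential_toReal_edist hnoneg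
  exact ⟨fun v => (edist E' w' none (some v)).toReal,
    fun v => EReal.coe_toReal (hq.edist_none_some_ne_top v) (hq.edist_none_some_ne_bot hnoneg v),
    hp, fun _ hsub => hp.mono hsub⟩
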